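/- Assume f satisfies (f_reg), (f_eq), (f_0), and in the case R1 = 0 assume additionally that f satisfies either (f_subl) or (f_subc). Then there exists a constant C > 0 (depending only on f, p, N, R1, R2) such that every radial solution u of the Neumann problem on [R1,R2] satisfies |u(r)| + |u'(r)| ≤ C for all r ∈ [R1,R2]. -/

import Mathlib

open Real Set Filter Topology

noncomputable def phip (p s : ℝ) : ℝ := |s| ^ (p - 2) * s

def Freg (f : ℝ → ℝ) : Prop :=
  ContinuousOn f (Ici 0) ∧ ContDiffOn ℝ 1 f (Ioi 0)

def Feq (f : ℝ → ℝ) : Prop :=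
  f 0 = 0 ∧ f 1 = 0 ∧ (∀ s : ℝ, 0 < s → s < 1 → f s < 0) ∧ (∀ s : ℝ, 1 < s → 0 < f s)

def Fzero (p : ℝ) (f : ℝ → ℝ) : Prop :=
  ∃ c : ℝ, ∀ᶠ s in 𝓝[>] (0:ℝ), c ≤ f s / s ^ (p - 1)

noncomputable def pstar (p : ℝ) (N : ℕ) : EReal :=
  if p < (N:ℝ) then (((N:ℝ) * p / ((N:ℝ) - p) : ℝ) : EReal) else ⊤

noncomputable def fstar (f : ℝ → ℝ) (s : ℝ) : ℝ := sSup (f '' Icc 1 s)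

noncomputable def Fint (f : ℝ → ℝ) (s : ℝ) : ℝ := ∫ σ in (1:ℝ)..s, f σ

def Fsubl (p : ℝ) (f : ℝ → ℝ) : Prop :=
  ∃ M : ℝ, 0 < M ∧ ∀ ε > 0, ∀ᶠ s in atTop, f s / s ^ (p - 1) ≤ M + ε

def FsubcWith (p : ℝ) (N : ℕ) (f : ℝ → ℝ) (η : ℝ) : Prop :=
  (∀ c : ℝ, ∃ᶠ s in atTop, c < f s / s ^ (p - 1)) ∧
  0 < η ∧ η < 1 ∧
  ∃ L : ℝ, (L : EReal) < pstar p N ∧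
    ∀ᶠ s in atTop, fstar f s * s / Fint f (η * s) ≤ L

def Fsubc (p : ℝ) (N : ℕ) (f : ℝ → ℝ) : Prop := ∃ η : ℝ, FsubcWith p N f η

/-- A radial solution of the Neumann problem on `[R1,R2]`. -/
def NeumannSol (p : ℝ) (N : ℕ) (R1 R2 : ℝ) (f u : ℝ → ℝ) : Prop :=
  (∀ x ∈ Icc R1 R2, DifferentiableAt ℝ u x) ∧
  ContinuousOn (deriv u) (Icc R1 R2) ∧
  (∀ x ∈ Icc R1 R2, 0 < u x) ∧
  deriv u R1 = 0 ∧ deriv u R2 = 0 ∧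
  ContinuousOn (fun x => x ^ (N - 1) * phip p (deriv u x)) (Icc R1 R2) ∧
  ∀ x ∈ Ioc R1 R2,
    HasDerivAt (fun t => t ^ (N - 1) * phip p (deriv u t)) (-(x ^ (N - 1)) * f (u x)) x

noncomputable def fhat (f : ℝ → ℝ) (s : ℝ) : ℝ := if 0 ≤ s then f s else 0

noncomputable def Fhat (f : ℝ → ℝ) (s : ℝ) : ℝ := ∫ σ in (1:ℝ)..s, fhat f σ

/-- A solution of the Cauchy problem with datum `d`, for the nonlinearity `g`. -/
def CauchySol (p : ℝ) (N : ℕ) (R1 R2 : ℝ) (g u : ℝ → ℝ) (d : ℝ) : Prop :=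
  (∀ x ∈ Icc R1 R2, DifferentiableAt ℝ u x) ∧
  ContinuousOn (deriv u) (Icc R1 R2) ∧
  u R1 = d ∧ deriv u R1 = 0 ∧
  ContinuousOn (fun x => x ^ (N - 1) * phip p (deriv u x)) (Icc R1 R2) ∧
  ∀ x ∈ Ioc R1 R2,
    HasDerivAt (fun t => t ^ (N - 1) * phip p (deriv u t)) (-(x ^ (N - 1)) * g (u x)) x

noncomputable def rOne (R1 R2 : ℝ) (u : ℝ → ℝ) : ℝ :=
  sSup {x | x ∈ Icc R1 R2 ∧ ∀ s ∈ Ico R1 x, 0 < u s}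

noncomputable def rZero (R2 η d : ℝ) (u : ℝ → ℝ) : ℝ :=
  sSup {x | x ∈ Icc 0 R2 ∧ ∀ s ∈ Ico 0 x, η * d < u s}

noncomputable def energy (p : ℝ) (f u : ℝ → ℝ) (x : ℝ) : ℝ :=
  |deriv u x| ^ p / (p / (p - 1)) + Fhat f (u x)

def NonConstOn (R1 R2 : ℝ) (u : ℝ → ℝ) : Prop :=
  ∃ x ∈ Icc R1 R2, ∃ x' ∈ Icc R1 R2, u x ≠ u x'

def DistinctOn (R1 R2 : ℝ) (u v : ℝ → ℝ) : Prop :=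
  ∃ x ∈ Icc R1 R2, u x ≠ v x

noncomputable def nOverPstar (p : ℝ) (N : ℕ) : ℝ :=
  if p < (N:ℝ) then ((N:ℝ) - p) / p else 0

/-!
Integrating the equation `(r ^ (N - 1) φ_p(u'))' = -r ^ (N - 1) f(u)` from `R1` bounds `u'` above,
because `f` is bounded below on `(0, ∞)`; integrating it up to `R2` bounds `u'` below away from the
origin. The total flux is zero while `f > 0` on `(1, ∞)`, so `u` takes a value at most `1`; it is
nonincreasing before the first such point and grows by a bounded amount afterwards. Hence it is
enough to bound `d = u(R1)`. For `R1 > 0` the two bounds on `u'` do this.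

On a ball, `u` stays above `η d` up to the radius `δ` with
`δ ^ p f*(d) = N ((1 - η) d) ^ (p - 1)`. If `f` is `p`-sublinear then `δ` is bounded away from `0`,
and the bound on `u'` over `[δ, R2]` again controls `d`. If `f` is subcritical, the Pohozaev
functional grows on `[0, δ]` by at least a multiple of `δ ^ N d f*(d)`, which tends to infinity with
`d`; on `[δ, R2]` it loses only a bounded amount, and its value at `R2` is bounded above.
-/

/-! ### Calculus -/

lemma sub_le_of_deriv_le_mul_pow {g g' : ℝ → ℝ} {a b K : ℝ} {n : ℕ} (hab : a ≤ b)
    (hg : ContinuousOn g (Icc a b)) (hg' : ∀ x ∈ Ioo a b, HasDerivAt g (g' x) x)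
    (hK : ∀ x ∈ Ioo a b, g' x ≤ K * x ^ n) :
    g b - g a ≤ K * ((b ^ (n + 1) - a ^ (n + 1)) / (n + 1)) := by
  have h := intervalIntegral.sub_le_integral_of_hasDeriv_right_of_le hab hg
    (fun x hx => (hg' x hx).hasDerivWithinAt) (Continuous.integrableOn_Icc (by fun_prop)) hK
  rwa [intervalIntegral.integral_const_mul, integral_pow] at h

lemma le_sub_of_mul_pow_le_deriv {g g' : ℝ → ℝ} {a b K : ℝ} {n : ℕ} (hab : a ≤ b)
    (hg : ContinuousOn g (Icc a b)) (hg' : ∀ x ∈ Ioo a b, HasDerivAt g (g' x) x)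
    (hK : ∀ x ∈ Ioo a b, K * x ^ n ≤ g' x) :
    K * ((b ^ (n + 1) - a ^ (n + 1)) / (n + 1)) ≤ g b - g a := by
  have h := intervalIntegral.integral_le_sub_of_hasDeriv_right_of_le hab hg
    (fun x hx => (hg' x hx).hasDerivWithinAt) (Continuous.integrableOn_Icc (by fun_prop)) hK
  rwa [intervalIntegral.integral_const_mul, integral_pow] at h

lemma le_mul_rpow_of_deriv_mul_le {g g' : ℝ → ℝ} {S L : ℝ} (hS : 0 < S)
    (hg : ∀ s ≥ S, HasDerivAt g (g' s) s) (h : ∀ s ≥ S, g' s * s ≤ L * g s) {s : ℝ}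
    (hs : S ≤ s) : g s ≤ g S * (s / S) ^ L := by
  have hderiv : ∀ t ≥ S, HasDerivAt (fun t => g t * t ^ (-L))
      (t ^ (-L - 1) * (g' t * t - L * g t)) t := by
    intro t ht
    have ht0 : 0 < t := hS.trans_le ht
    refine ((hg t ht).mul (hasDerivAt_rpow_const (Or.inl ht0.ne'))).congr_deriv ?_
    rw [← sub_add_cancel (-L) 1, rpow_add_one ht0.ne', sub_add_cancel]
    ring
  have hanti : AntitoneOn (fun t => g t * t ^ (-L)) (Ici S) := by
    refine antitoneOn_of_hasDerivWithinAt_nonpos (convex_Ici S)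
      (fun t ht => (hderiv t ht).continuousAt.continuousWithinAt)
      (fun t ht => (hderiv t (interior_subset ht)).hasDerivWithinAt) fun t ht => ?_
    have ht' : S ≤ t := interior_subset ht
    exact mul_nonpos_of_nonneg_of_nonpos (rpow_nonneg (hS.le.trans ht') _)
      (sub_nonpos.2 (h t ht'))
  have hs0 : 0 < s := hS.trans_le hs
  calc g s = g s * s ^ (-L) * s ^ L := by
        rw [mul_assoc, ← rpow_add hs0, neg_add_cancel, rpow_zero, mul_one]
    _ ≤ g S * S ^ (-L) * s ^ L :=
        mul_le_mul_of_nonneg_right (hanti self_mem_Ici hs hs) (rpow_nonneg hs0.le L)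
    _ = g S * (s / S) ^ L := by
        rw [div_rpow hs0.le hS.le, rpow_neg hS.le]
        ring

lemma exists_first_le_of_continuousOn {g : ℝ → ℝ} {a b c : ℝ} (hg : ContinuousOn g (Icc a b))
    (hle : ∃ x ∈ Icc a b, g x ≤ c) :
    ∃ r ∈ Icc a b, g r ≤ c ∧ ∀ x ∈ Ico a r, c < g x := by
  have hS : IsCompact (Icc a b ∩ g ⁻¹' Iic c) :=
    isCompact_Icc.of_isClosed_subset
      (hg.preimage_isClosed_of_isClosed isClosed_Icc isClosed_Iic) inter_subset_left
  obtain ⟨r, ⟨hr, hgr⟩, hmin⟩ := hS.exists_isLeast hle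
  refine ⟨r, hr, hgr, fun x hx => not_le.1 fun hc => ?_⟩
  exact (hmin ⟨⟨hx.1, hx.2.le.trans hr.2⟩, hc⟩).not_gt hx.2

lemma exists_abs_le_of_continuousOn_Ici {g : ℝ → ℝ} (hg : ContinuousOn g (Ici 0)) (C : ℝ) :
    ∃ B > 0, ∀ s ∈ Icc 0 C, |g s| ≤ B := by
  obtain ⟨B, hB⟩ := isCompact_Icc.exists_bound_of_continuousOn (hg.mono Icc_subset_Ici_self)
  exact ⟨max B 1, by positivity, fun s hs => (hB s hs).trans (le_max_left _ _)⟩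

/-! ### The function `φ_p` -/

section phip

variable {p s X : ℝ}

lemma phip_zero (p : ℝ) : phip p 0 = 0 := by simp [phip]

lemma phip_neg (p s : ℝ) : phip p (-s) = -phip p s := by simp [phip]

lemma abs_phip (hp : p ≠ 1) (s : ℝ) : |phip p s| = |s| ^ (p - 1) := by
  rcases eq_or_ne s 0 with rfl | hs
  · simp [phip, zero_rpow (sub_ne_zero.2 hp)]
  · rw [phip, abs_mul, abs_of_nonneg (by positivity), ← rpow_add_one (abs_ne_zero.2 hs)]
    ring_nf

lemma phip_mul_self (hp : p ≠ 0) (s : ℝ) : phip p s * s = |s| ^ p := by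
  rcases eq_or_ne s 0 with rfl | hs
  · simp [phip, zero_rpow hp]
  · rw [phip, mul_assoc, ← abs_mul_abs_self s, ← sq, ← rpow_two, ← rpow_add (abs_pos.2 hs),
      sub_add_cancel]

lemma abs_phip_rpow_conj (hp : p ≠ 1) (s : ℝ) : |phip p s| ^ (p / (p - 1)) = |s| ^ p := by
  rw [abs_phip hp, ← rpow_mul (abs_nonneg s), mul_div_cancel₀ _ (sub_ne_zero.2 hp)]

lemma phip_conj_phip (hp : p ≠ 1) (s : ℝ) : phip (p / (p - 1)) (phip p s) = s := by
  rcases eq_or_ne s 0 with rfl | hs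
  · simp [phip]
  · have hs' : 0 < |s| := abs_pos.2 hs
    have hexp : (p - 1) * (p / (p - 1) - 2) + (p - 2) = 0 := by
      field_simp [sub_ne_zero.2 hp]
      ring
    rw [phip, abs_phip hp, ← rpow_mul hs'.le, phip, ← mul_assoc, ← rpow_add hs', hexp, rpow_zero,
      one_mul]

lemma le_rpow_of_phip_le (hp : 1 < p) (hX : 0 ≤ X) (h : phip p s ≤ X) :
    s ≤ X ^ (1 / (p - 1)) := by
  rcases le_or_gt s 0 with hs | hs
  · exact hs.trans (rpow_nonneg hX _)
  · have hphip : phip p s = s ^ (p - 1) := by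
      have hnonneg : 0 ≤ phip p s := mul_nonneg (rpow_nonneg (abs_nonneg s) _) hs.le
      rw [← abs_of_nonneg hnonneg, abs_phip hp.ne', abs_of_pos hs]
    rw [one_div]
    exact (le_rpow_inv_iff_of_pos hs.le hX (sub_pos.2 hp)).2 (hphip ▸ h)

/-- No differentiability of `v` itself is needed: `|v| ^ p` is the conjugate power of `φ_p(v)`. -/
lemma hasDerivAt_abs_rpow_div_conj (hp : 1 < p) {v : ℝ → ℝ} {w x : ℝ}
    (h : HasDerivAt (fun y => phip p (v y)) w x) :
    HasDerivAt (fun y => |v y| ^ p / (p / (p - 1))) (v x * w) x := by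
  have hp1 : 0 < p - 1 := sub_pos.2 hp
  have hq : 1 < p / (p - 1) := (one_lt_div hp1).2 (sub_lt_self p one_pos)
  have := ((hasDerivAt_abs_rpow (phip p (v x)) hq).comp x h).div_const (p / (p - 1))
  simp only [Function.comp_def, abs_phip_rpow_conj hp.ne'] at this
  refine this.congr_deriv ?_
  rw [mul_assoc (p / (p - 1)), ← phip, phip_conj_phip hp.ne']
  field_simp

end phip

/-! ### The Cauchy problem -/

/-- The flux `r ^ n φ_p(u'(r))` of a radial function, where `n + 1` is the dimension. -/
noncomputable def flux (p : ℝ) (n : ℕ) (u : ℝ → ℝ) (x : ℝ) : ℝ := x ^ n * phip p (deriv u x)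

/-- The radius up to which a solution on a ball loses at most `ℓ` from its initial value as long as
`f(u) ≤ B`; it solves `δ ^ p * B = (n + 1) * ℓ ^ (p - 1)`. -/
noncomputable def dropRadius (p : ℝ) (n : ℕ) (B ℓ : ℝ) : ℝ :=
  ((n + 1) * ℓ ^ (p - 1) / B) ^ (1 / p)

section dropRadius

variable {p B ℓ : ℝ} {n : ℕ}

lemma dropRadius_pos (hB : 0 < B) (hℓ : 0 < ℓ) : 0 < dropRadius p n B ℓ := by
  unfold dropRadius
  positivity

lemma dropRadius_rpow (hp : p ≠ 0) (hB : 0 ≤ B) (hℓ : 0 ≤ ℓ) :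
    dropRadius p n B ℓ ^ p = (n + 1) * ℓ ^ (p - 1) / B := by
  rw [dropRadius, ← rpow_mul (by positivity), one_div_mul_cancel hp, rpow_one]

lemma rpow_mul_dropRadius (hp : 1 < p) (hB : 0 < B) (hℓ : 0 < ℓ) :
    (B * dropRadius p n B ℓ / (n + 1)) ^ (1 / (p - 1)) * dropRadius p n B ℓ = ℓ := by
  have hp1 : p - 1 ≠ 0 := (sub_pos.2 hp).ne'
  set δ := dropRadius p n B ℓ
  have hδ : 0 < δ := dropRadius_pos hB hℓ
  have hδp : δ * δ ^ (p - 1) = (n + 1) * ℓ ^ (p - 1) / B := by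
    rw [mul_comm, ← rpow_add_one hδ.ne', sub_add_cancel,
      dropRadius_rpow (zero_lt_one.trans hp).ne' hB.le hℓ.le]
  calc (B * δ / (n + 1)) ^ (1 / (p - 1)) * δ
      = (B * δ / (n + 1) * δ ^ (p - 1)) ^ (1 / (p - 1)) := by
        rw [mul_rpow (by positivity) (by positivity), ← rpow_mul hδ.le, mul_one_div_cancel hp1,
          rpow_one]
    _ = (ℓ ^ (p - 1)) ^ (1 / (p - 1)) := by
        rw [div_mul_eq_mul_div, mul_assoc, hδp]
        field_simp
    _ = ℓ := by rw [← rpow_mul hℓ.le, mul_one_div_cancel hp1, rpow_one]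

lemma dropRadius_mul_rpow_mul {s : ℝ} (hℓ : 0 ≤ ℓ) (hs : 0 < s) :
    dropRadius p n (B * s ^ (p - 1)) (ℓ * s) = dropRadius p n B ℓ := by
  rw [dropRadius, dropRadius, mul_rpow hℓ hs.le, ← mul_assoc,
    mul_div_mul_right _ _ (rpow_pos_of_pos hs _).ne']

lemma dropRadius_mul_pow {s : ℝ} (hB : 0 ≤ B) (hℓ : 0 ≤ ℓ) (hs : 0 ≤ s) :
    dropRadius p n B (ℓ * s) ^ (n + 1) =
      ((n + 1) * ℓ ^ (p - 1)) ^ (((n : ℝ) + 1) / p) * (s ^ (p - 1) / B) ^ (((n : ℝ) + 1) / p) := by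
  rw [dropRadius, ← rpow_natCast, ← rpow_mul (by positivity),
    ← mul_rpow (by positivity) (by positivity), mul_rpow hℓ hs]
  push_cast
  ring_nf

end dropRadius

namespace CauchySol

variable {p R1 R2 d B K x y : ℝ} {n : ℕ} {f u : ℝ → ℝ}

lemma continuousOn (h : CauchySol p (n + 1) R1 R2 f u d) : ContinuousOn u (Icc R1 R2) :=
  fun x hx => (h.1 x hx).continuousAt.continuousWithinAt

lemma apply_left (h : CauchySol p (n + 1) R1 R2 f u d) : u R1 = d := h.2.2.1

lemma deriv_left (h : CauchySol p (n + 1) R1 R2 f u d) : deriv u R1 = 0 := h.2.2.2.1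

lemma continuousOn_flux (h : CauchySol p (n + 1) R1 R2 f u d) :
    ContinuousOn (flux p n u) (Icc R1 R2) := h.2.2.2.2.1

lemma hasDerivAt_flux (h : CauchySol p (n + 1) R1 R2 f u d) (hx : x ∈ Ioc R1 R2) :
    HasDerivAt (flux p n u) (-(x ^ n) * f (u x)) x := h.2.2.2.2.2 x hx

lemma flux_left (h : CauchySol p (n + 1) R1 R2 f u d) : flux p n u R1 = 0 := by
  rw [flux, h.deriv_left, phip_zero, mul_zero]

lemma flux_sub_le (h : CauchySol p (n + 1) R1 R2 f u d) (hR1 : 0 ≤ R1) (hx : R1 ≤ x)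
    (hxy : x ≤ y) (hy : y ≤ R2) (hK : ∀ z ∈ Ioo x y, -K ≤ f (u z)) :
    flux p n u y - flux p n u x ≤ K * ((y ^ (n + 1) - x ^ (n + 1)) / (n + 1)) := by
  refine sub_le_of_deriv_le_mul_pow hxy (h.continuousOn_flux.mono (Icc_subset_Icc hx hy))
    (fun z hz => h.hasDerivAt_flux ⟨hx.trans_lt hz.1, hz.2.le.trans hy⟩) fun z hz => ?_
  have hz0 : 0 ≤ z ^ n := pow_nonneg (hR1.trans (hx.trans hz.1.le)) n
  linarith [mul_le_mul_of_nonneg_left (hK z hz) hz0]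

lemma le_flux_sub (h : CauchySol p (n + 1) R1 R2 f u d) (hR1 : 0 ≤ R1) (hx : R1 ≤ x)
    (hxy : x ≤ y) (hy : y ≤ R2) (hB : ∀ z ∈ Ioo x y, f (u z) ≤ B) :
    -B * ((y ^ (n + 1) - x ^ (n + 1)) / (n + 1)) ≤ flux p n u y - flux p n u x := by
  refine le_sub_of_mul_pow_le_deriv hxy (h.continuousOn_flux.mono (Icc_subset_Icc hx hy))
    (fun z hz => h.hasDerivAt_flux ⟨hx.trans_lt hz.1, hz.2.le.trans hy⟩) fun z hz => ?_
  have hz0 : 0 ≤ z ^ n := pow_nonneg (hR1.trans (hx.trans hz.1.le)) n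
  linarith [mul_le_mul_of_nonneg_left (hB z hz) hz0]

lemma phip_deriv_le (h : CauchySol p (n + 1) R1 R2 f u d) (hR1 : 0 ≤ R1) (hK0 : 0 ≤ K)
    (hx : x ∈ Ioc R1 R2) (hK : ∀ z ∈ Ioo R1 x, -K ≤ f (u z)) :
    phip p (deriv u x) ≤ K * x / (n + 1) := by
  refine le_of_mul_le_mul_left ?_ (pow_pos (hR1.trans_lt hx.1) n)
  calc x ^ n * phip p (deriv u x) = flux p n u x - flux p n u R1 := by
        rw [h.flux_left, sub_zero, flux]
    _ ≤ K * ((x ^ (n + 1) - R1 ^ (n + 1)) / (n + 1)) :=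
        h.flux_sub_le hR1 le_rfl hx.1.le hx.2 hK
    _ ≤ K * (x ^ (n + 1) / (n + 1)) := by
        gcongr
        exact sub_le_self _ (pow_nonneg hR1 _)
    _ = x ^ n * (K * x / (n + 1)) := by ring

lemma neg_phip_deriv_le (h : CauchySol p (n + 1) R1 R2 f u d) (hR1 : 0 ≤ R1) (hB0 : 0 ≤ B)
    (hx : x ∈ Ioc R1 R2) (hB : ∀ z ∈ Ioo R1 x, f (u z) ≤ B) :
    -phip p (deriv u x) ≤ B * x / (n + 1) := by
  refine le_of_mul_le_mul_left ?_ (pow_pos (hR1.trans_lt hx.1) n)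
  calc x ^ n * -phip p (deriv u x) = -(flux p n u x - flux p n u R1) := by
        rw [h.flux_left, sub_zero, flux, mul_neg]
    _ ≤ B * ((x ^ (n + 1) - R1 ^ (n + 1)) / (n + 1)) := by
        linarith [h.le_flux_sub hR1 le_rfl hx.1.le hx.2 hB]
    _ ≤ B * (x ^ (n + 1) / (n + 1)) := by
        gcongr
        exact sub_le_self _ (pow_nonneg hR1 _)
    _ = x ^ n * (B * x / (n + 1)) := by ring

lemma deriv_le (h : CauchySol p (n + 1) R1 R2 f u d) (hp : 1 < p) (hR1 : 0 ≤ R1) (hK0 : 0 ≤ K)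
    (hx : x ∈ Icc R1 R2) (hK : ∀ z ∈ Ioo R1 x, -K ≤ f (u z)) :
    deriv u x ≤ (K * x / (n + 1)) ^ (1 / (p - 1)) := by
  have hx0 : 0 ≤ x := hR1.trans hx.1
  rcases hx.1.eq_or_lt with rfl | hlt
  · rw [h.deriv_left]
    positivity
  · exact le_rpow_of_phip_le hp (by positivity) (h.phip_deriv_le hR1 hK0 ⟨hlt, hx.2⟩ hK)

lemma neg_deriv_le (h : CauchySol p (n + 1) R1 R2 f u d) (hp : 1 < p) (hR1 : 0 ≤ R1)
    (hB0 : 0 ≤ B) (hx : x ∈ Icc R1 R2) (hB : ∀ z ∈ Ioo R1 x, f (u z) ≤ B) :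
    -deriv u x ≤ (B * x / (n + 1)) ^ (1 / (p - 1)) := by
  have hx0 : 0 ≤ x := hR1.trans hx.1
  rcases hx.1.eq_or_lt with rfl | hlt
  · rw [h.deriv_left, neg_zero]
    positivity
  · refine le_rpow_of_phip_le hp (by positivity) ?_
    rw [phip_neg]
    exact h.neg_phip_deriv_le hR1 hB0 ⟨hlt, hx.2⟩ hB

lemma sub_le (h : CauchySol p (n + 1) R1 R2 f u d) (hp : 1 < p) (hR1 : 0 ≤ R1) (hK0 : 0 ≤ K)
    (hx : R1 ≤ x) (hxy : x ≤ y) (hy : y ≤ R2) (hK : ∀ z ∈ Ioo R1 y, -K ≤ f (u z)) :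
    u y - u x ≤ (K * y / (n + 1)) ^ (1 / (p - 1)) * (y - x) := by
  have hsub : Icc x y ⊆ Icc R1 R2 := Icc_subset_Icc hx hy
  refine (convex_Icc x y).image_sub_le_mul_sub_of_deriv_le (h.continuousOn.mono hsub)
    (fun z hz => (h.1 z (hsub (interior_subset hz))).differentiableWithinAt) (fun z hz => ?_)
    x (left_mem_Icc.2 hxy) y (right_mem_Icc.2 hxy) hxy
  have hz' := interior_subset hz
  have hz0 : 0 ≤ z := hR1.trans (hx.trans hz'.1)
  calc deriv u z ≤ (K * z / (n + 1)) ^ (1 / (p - 1)) :=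
        h.deriv_le hp hR1 hK0 (hsub hz') fun t ht => hK t ⟨ht.1, ht.2.trans_le hz'.2⟩
    _ ≤ (K * y / (n + 1)) ^ (1 / (p - 1)) := by
        gcongr
        exact hz'.2

lemma sub_le_rpow_mul (h : CauchySol p (n + 1) R1 R2 f u d) (hp : 1 < p) (hR1 : 0 ≤ R1)
    (hB0 : 0 ≤ B) (hx : x ∈ Icc R1 R2) (hB : ∀ z ∈ Ioo R1 x, f (u z) ≤ B) :
    d - u x ≤ (B * x / (n + 1)) ^ (1 / (p - 1)) * x := by
  have hx0 : 0 ≤ x := hR1.trans hx.1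
  have hsub : Icc R1 x ⊆ Icc R1 R2 := Icc_subset_Icc le_rfl hx.2
  have hderiv : ∀ z ∈ interior (Icc R1 x), -(B * x / (n + 1)) ^ (1 / (p - 1)) ≤ deriv u z := by
    intro z hz
    have hz' := interior_subset hz
    have hz0 : 0 ≤ z := hR1.trans hz'.1
    refine neg_le.1 ((h.neg_deriv_le hp hR1 hB0 (hsub hz')
      fun t ht => hB t ⟨ht.1, ht.2.trans_le hz'.2⟩).trans ?_)
    gcongr
    exact hz'.2
  have hmv := (convex_Icc R1 x).mul_sub_le_image_sub_of_le_deriv (h.continuousOn.mono hsub)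
    (fun z hz => (h.1 z (hsub (interior_subset hz))).differentiableWithinAt) hderiv
    R1 (left_mem_Icc.2 hx.1) x (right_mem_Icc.2 hx.1) hx.1
  rw [h.apply_left] at hmv
  calc d - u x ≤ (B * x / (n + 1)) ^ (1 / (p - 1)) * (x - R1) := by linarith
    _ ≤ (B * x / (n + 1)) ^ (1 / (p - 1)) * x := by
        gcongr
        exact sub_le_self x hR1

lemma sub_le_of_le_dropRadius (h : CauchySol p (n + 1) R1 R2 f u d) (hp : 1 < p) (hR1 : 0 ≤ R1)
    (hB0 : 0 < B) {ℓ : ℝ} (hℓ : 0 < ℓ) (hx : x ∈ Icc R1 R2) (hxδ : x ≤ dropRadius p n B ℓ)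
    (hB : ∀ z ∈ Ioo R1 x, f (u z) ≤ B) : d - u x ≤ ℓ := by
  have hx0 : 0 ≤ x := hR1.trans hx.1
  have hδ : 0 < dropRadius p n B ℓ := dropRadius_pos hB0 hℓ
  calc d - u x ≤ (B * x / (n + 1)) ^ (1 / (p - 1)) * x := h.sub_le_rpow_mul hp hR1 hB0.le hx hB
    _ ≤ (B * dropRadius p n B ℓ / (n + 1)) ^ (1 / (p - 1)) * dropRadius p n B ℓ := by gcongr
    _ = ℓ := rpow_mul_dropRadius hp hB0 hℓ

lemma antitoneOn (h : CauchySol p (n + 1) R1 R2 f u d) (hp : 1 < p) (hR1 : 0 ≤ R1) {r : ℝ}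
    (hr : r ≤ R2) (hf : ∀ z ∈ Ioo R1 r, 0 ≤ f (u z)) : AntitoneOn u (Icc R1 r) := by
  intro x hx y hy hxy
  have hinc := h.sub_le hp hR1 le_rfl hx.1 hxy (hy.2.trans hr) fun z hz => by
    simpa only [neg_zero] using hf z ⟨hz.1, hz.2.trans_le hy.2⟩
  rw [zero_mul, zero_div, zero_rpow (one_div_pos.2 (sub_pos.2 hp)).ne', zero_mul] at hinc
  exact sub_nonpos.1 hinc

end CauchySol

/-! ### The nonlinearity -/

section Nonlinearity

variable {f : ℝ → ℝ} {s t : ℝ}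

lemma exists_neg_le_of_pos (hf : ContinuousOn f (Ici 0)) (hpos : ∀ s, 1 < s → 0 < f s) :
    ∃ K > 0, ∀ s, 0 < s → -K ≤ f s := by
  obtain ⟨K, hK0, hK⟩ := exists_abs_le_of_continuousOn_Ici hf 1
  refine ⟨K, hK0, fun s hs => ?_⟩
  rcases le_or_gt s 1 with h | h
  · exact (abs_le.1 (hK s ⟨hs.le, h⟩)).1
  · linarith [hpos s h]

lemma Fsubl.exists_le_mul_rpow {p : ℝ} (h : Fsubl p f) (hp : 1 ≤ p)
    (hf : ContinuousOn f (Ici 0)) : ∃ A > 0, ∀ s, 1 ≤ s → f s ≤ A * s ^ (p - 1) := by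
  obtain ⟨M, hM0, hM⟩ := h
  obtain ⟨S, hS⟩ := eventually_atTop.1 (hM 1 one_pos)
  obtain ⟨B, _, hB⟩ := exists_abs_le_of_continuousOn_Ici hf S
  refine ⟨max (M + 1) B, by positivity, fun s hs => ?_⟩
  have hs0 : 0 < s := one_pos.trans_le hs
  rcases le_total S s with hSs | hsS
  · calc f s ≤ (M + 1) * s ^ (p - 1) := (div_le_iff₀ (by positivity)).1 (hS s hSs)
      _ ≤ max (M + 1) B * s ^ (p - 1) := by
        gcongr
        exact le_max_left _ _
  · calc f s ≤ B * 1 := by linarith [(abs_le.1 (hB s ⟨hs0.le, hsS⟩)).2]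
      _ ≤ max (M + 1) B * s ^ (p - 1) := by
        gcongr
        · exact le_max_right _ _
        · exact one_le_rpow hs (sub_nonneg.2 hp)

lemma hasDerivAt_Fint (hf : ContinuousOn f (Ioi 0)) (hs : 0 < s) :
    HasDerivAt (Fint f) (f s) s := by
  refine intervalIntegral.integral_hasDerivAt_right ?_
    (hf.stronglyMeasurableAtFilter isOpen_Ioi s hs) (hf.continuousAt (Ioi_mem_nhds hs))
  exact (hf.mono fun x hx => (lt_min one_pos hs).trans_le hx.1).intervalIntegrable

lemma continuousOn_Fint (hf : ContinuousOn f (Ici 0)) : ContinuousOn (Fint f) (Ici 0) := by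
  intro s hs
  rcases (mem_Ici.1 hs).eq_or_lt with rfl | hs
  · have hint : IntervalIntegrable f MeasureTheory.volume 0 1 :=
      (hf.mono (by rw [uIcc_of_le zero_le_one]; exact Icc_subset_Ici_self)).intervalIntegrable
    have hcont := intervalIntegral.continuousOn_primitive_interval' hint right_mem_uIcc
    rw [uIcc_of_le zero_le_one] at hcont
    exact (hcont 0 (left_mem_Icc.2 zero_le_one)).mono_of_mem_nhdsWithin
      (Icc_mem_nhdsGE one_pos)
  · exact (hasDerivAt_Fint (hf.mono Ioi_subset_Ici_self) hs).continuousAt.continuousWithinAt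

lemma Fhat_eq_Fint (hs : 0 ≤ s) : Fhat f s = Fint f s := by
  refine intervalIntegral.integral_congr fun x hx => if_pos ?_
  exact (le_min zero_le_one hs).trans hx.1

lemma hasDerivAt_Fhat (hf : ContinuousOn f (Ioi 0)) (hs : 0 < s) :
    HasDerivAt (Fhat f) (f s) s :=
  (hasDerivAt_Fint hf hs).congr_of_eventuallyEq <| by
    filter_upwards [Ioi_mem_nhds hs] with t ht using Fhat_eq_Fint (le_of_lt ht)

lemma strictMonoOn_Fint (hf : ContinuousOn f (Ici 0)) (hpos : ∀ s, 1 < s → 0 < f s) :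
    StrictMonoOn (Fint f) (Ici 1) := by
  refine strictMonoOn_of_hasDerivWithinAt_pos (f' := f) (convex_Ici 1)
    ((continuousOn_Fint hf).mono (Ici_subset_Ici.2 zero_le_one)) (fun x hx => ?_) fun x hx => ?_
  all_goals rw [interior_Ici] at hx
  · exact (hasDerivAt_Fint (hf.mono Ioi_subset_Ici_self) (one_pos.trans hx)).hasDerivWithinAt
  · exact hpos x hx

lemma Fint_pos (hf : ContinuousOn f (Ici 0)) (hpos : ∀ s, 1 < s → 0 < f s) (hs : 1 < s) :
    0 < Fint f s := by
  simpa only [Fint, intervalIntegral.integral_same] using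
    strictMonoOn_Fint hf hpos self_mem_Ici hs.le hs

lemma le_fstar (hf : ContinuousOn f (Ici 0)) (ht : t ∈ Icc 1 s) : f t ≤ fstar f s := by
  refine le_csSup ?_ (mem_image_of_mem f ht)
  exact (isCompact_Icc.image_of_continuousOn
    (hf.mono fun x hx => zero_le_one.trans hx.1)).bddAbove

lemma fstar_pos (hf : ContinuousOn f (Ici 0)) (hpos : ∀ s, 1 < s → 0 < f s) (hs : 1 < s) :
    0 < fstar f s :=
  (hpos s hs).trans_le (le_fstar hf ⟨hs.le, le_rfl⟩)

lemma fstar_mono (hf : ContinuousOn f (Ici 0)) (hs : 1 ≤ s) (hst : s ≤ t) :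
    fstar f s ≤ fstar f t := by
  refine csSup_le ((nonempty_Icc.2 hs).image f) ?_
  rintro _ ⟨σ, hσ, rfl⟩
  exact le_fstar hf ⟨hσ.1, hσ.2.trans hst⟩

end Nonlinearity

/-! ### Subcritical growth -/

/-- The growth half of `(f_subc)`: `limsup f*(s) s / F(η s) < p*` for some `η ∈ (0, 1)`, without the
superlinearity at infinity. -/
def Subcritical (p : ℝ) (N : ℕ) (f : ℝ → ℝ) : Prop :=
  ∃ η ∈ Ioo (0 : ℝ) 1, ∃ L : ℝ, (L : EReal) < pstar p N ∧
    ∀ᶠ s in atTop, fstar f s * s / Fint f (η * s) ≤ L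

lemma Fsubc.subcritical {p : ℝ} {N : ℕ} {f : ℝ → ℝ} (h : Fsubc p N f) : Subcritical p N f := by
  obtain ⟨η, -, hη0, hη1, hL⟩ := h
  exact ⟨η, ⟨hη0, hη1⟩, hL⟩

/-- Constants that witness `Subcritical p (n + 1) f` without division: `L < p*` is expressed through
`nOverPstar`, which stands for `(n + 1) / p*`, and `S` is a threshold for the growth inequality. -/
structure SubcriticalWitness (p : ℝ) (n : ℕ) (f : ℝ → ℝ) (η L S : ℝ) : Prop where
  eta_pos : 0 < η
  eta_lt_one : η < 1
  exponent_pos : 0 < L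
  one_lt_eta_mul : 1 < η * S
  nOverPstar_mul_lt : nOverPstar p (n + 1) * L < n + 1
  fstar_mul_le : ∀ s ≥ S, fstar f s * s ≤ L * Fint f (η * s)

/-- The zeroth-order part of the derivative of the Pohozaev functional with parameter `a` in
dimension `n + 1`, as a function of the value of the solution. -/
noncomputable def pohozaevDensity (n : ℕ) (a : ℝ) (f : ℝ → ℝ) (s : ℝ) : ℝ :=
  (n + 1) * Fint f s - a * (f s * s)

section Exponents

variable {p : ℝ} {N : ℕ}

lemma nOverPstar_nonneg (hp : 0 ≤ p) : 0 ≤ nOverPstar p N := by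
  unfold nOverPstar
  split_ifs with h
  · exact div_nonneg (sub_nonneg.2 h.le) hp
  · exact le_rfl

lemma div_sub_one_le_nOverPstar (hp : 0 < p) : N / p - 1 ≤ nOverPstar p N := by
  unfold nOverPstar
  split_ifs with h
  · rw [sub_div, div_self hp.ne']
  · exact sub_nonpos.2 ((div_le_one hp).2 (not_lt.1 h))

lemma one_lt_pstar (hp : 1 ≤ p) (hN : 0 < N) : 1 < pstar p N := by
  unfold pstar
  split_ifs with h
  · have : (0 : ℝ) < N := Nat.cast_pos.2 hN
    rw [← EReal.coe_one, EReal.coe_lt_coe_iff, one_lt_div (sub_pos.2 h)]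
    nlinarith
  · exact EReal.coe_lt_top 1

lemma nOverPstar_mul_lt_of_lt_pstar {L : ℝ} (hp : 0 < p) (hN : 0 < N)
    (h : (L : EReal) < pstar p N) : nOverPstar p N * L < N := by
  unfold nOverPstar
  unfold pstar at h
  split_ifs at h ⊢ with hpN
  · rw [EReal.coe_lt_coe_iff, lt_div_iff₀ (sub_pos.2 hpN)] at h
    rwa [div_mul_eq_mul_div, div_lt_iff₀ hp, mul_comm]
  · rw [zero_mul]
    exact Nat.cast_pos.2 hN

lemma exists_mul_rpow_le_rpow_mul {n : ℕ} {b : ℝ → ℝ} {b₀ C L S : ℝ} (hp : 1 < p)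
    (hb₀ : 0 < b₀) (hC : 0 < C) (hL : nOverPstar p (n + 1) * L < n + 1)
    (hb : ∀ s ≥ S, b₀ ≤ b s ∧ b s ≤ C * s ^ (L - 1)) :
    ∃ c > (0 : ℝ), ∃ θ > (0 : ℝ), ∀ s ≥ max S 1,
      c * s ^ θ ≤ b s ^ (1 - (n + 1) / p) * s ^ ((p - 1) * ((n + 1) / p) + 1) := by
  have hp0 : 0 < p := one_pos.trans hp
  set ν : ℝ := ((n : ℝ) + 1) / p with hν
  rcases le_or_gt ν 1 with h1 | h1
  · refine ⟨b₀ ^ (1 - ν), by positivity, (p - 1) * ν + 1, ?_, fun s hs => ?_⟩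
    · have : 0 < p - 1 := sub_pos.2 hp
      positivity
    · have hs0 : 0 ≤ s := zero_le_one.trans ((le_max_right _ _).trans hs)
      gcongr
      exact (hb s ((le_max_left _ _).trans hs)).1
  · have hpν : p * ν = n + 1 := mul_div_cancel₀ _ hp0.ne'
    have hνL : (ν - 1) * L < n + 1 := by
      refine hL.trans_le' (le_of_eq ?_)
      have hpn : p < ((n + 1 : ℕ) : ℝ) := by
        push_cast
        exact (one_lt_div hp0).1 h1
      rw [nOverPstar, if_pos hpn, sub_div, div_self hp0.ne', hν, Nat.cast_succ]
    refine ⟨C ^ (1 - ν), by positivity, n + 1 - (ν - 1) * L, sub_pos.2 hνL, fun s hs => ?_⟩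
    have hs0 : 0 < s := one_pos.trans_le ((le_max_right _ _).trans hs)
    obtain ⟨hb₀s, hbs⟩ := hb s ((le_max_left _ _).trans hs)
    calc C ^ (1 - ν) * s ^ (n + 1 - (ν - 1) * L)
        = (C * s ^ (L - 1)) ^ (1 - ν) * s ^ ((p - 1) * ν + 1) := by
          rw [mul_rpow hC.le (by positivity), ← rpow_mul hs0.le, mul_assoc, ← rpow_add hs0]
          congr 2
          linear_combination -hpν
      _ ≤ b s ^ (1 - ν) * s ^ ((p - 1) * ν + 1) := by
          have hanti := rpow_le_rpow_of_nonpos (hb₀.trans_le hb₀s) hbs (sub_nonpos.2 h1.le)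
          gcongr

/-- Since `s ^ (p - 1) / b` is `δ ^ p` up to a constant, this is the divergence of
`δ ^ (n + 1) * b * s`. -/
lemma tendsto_rpow_mul_atTop_of_le_rpow {n : ℕ} {b : ℝ → ℝ} {b₀ C L S : ℝ} (hp : 1 < p)
    (hb₀ : 0 < b₀) (hC : 0 < C) (hL : nOverPstar p (n + 1) * L < n + 1)
    (hb : ∀ s ≥ S, b₀ ≤ b s ∧ b s ≤ C * s ^ (L - 1)) :
    Tendsto (fun s => (s ^ (p - 1) / b s) ^ (((n : ℝ) + 1) / p) * (b s * s)) atTop atTop := by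
  obtain ⟨c, hc, θ, hθ, hle⟩ := exists_mul_rpow_le_rpow_mul hp hb₀ hC hL hb
  refine tendsto_atTop_mono' _ ?_ ((tendsto_rpow_atTop hθ).const_mul_atTop hc)
  filter_upwards [eventually_ge_atTop (max S 1)] with s hs
  have hs0 : 0 < s := one_pos.trans_le ((le_max_right _ _).trans hs)
  have hbs : 0 < b s := hb₀.trans_le (hb s ((le_max_left _ _).trans hs)).1
  refine (hle s hs).trans_eq ?_
  rw [div_rpow (by positivity) hbs.le, ← rpow_mul hs0.le, rpow_add_one hs0.ne', rpow_sub hbs,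
    rpow_one]
  ring

end Exponents

lemma Subcritical.exists_witness {p : ℝ} {n : ℕ} {f : ℝ → ℝ} (h : Subcritical p (n + 1) f)
    (hp : 1 ≤ p) (hf : ContinuousOn f (Ici 0)) (hpos : ∀ s, 1 < s → 0 < f s) :
    ∃ η L S : ℝ, SubcriticalWitness p n f η L S := by
  obtain ⟨η, ⟨hη0, hη1⟩, L, hL, hev⟩ := h
  obtain ⟨S, hS⟩ := eventually_atTop.1 hev
  have hp0 : 0 < p := one_pos.trans_le hp
  have hlt : ∀ {M : ℝ}, (M : EReal) < pstar p (n + 1) → nOverPstar p (n + 1) * M < n + 1 :=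
    fun hM => (nOverPstar_mul_lt_of_lt_pstar hp0 n.succ_pos hM).trans_eq (Nat.cast_succ n)
  have hηS : 1 < η * max S (2 / η) := calc
    1 < 2 := one_lt_two
    _ = η * (2 / η) := (mul_div_cancel₀ _ hη0.ne').symm
    _ ≤ η * max S (2 / η) := by
      gcongr
      exact le_max_right _ _
  refine ⟨η, max L 1, max S (2 / η), hη0, hη1, by positivity, hηS, ?_, fun s hs => ?_⟩
  · exact max_rec' (fun M => nOverPstar p (n + 1) * M < n + 1) (hlt hL)
      (hlt (by exact_mod_cast one_lt_pstar hp n.succ_pos))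
  · have hF : 0 < Fint f (η * s) := Fint_pos hf hpos (hηS.trans_le (by gcongr))
    calc fstar f s * s ≤ L * Fint f (η * s) :=
          (div_le_iff₀ hF).1 (hS s ((le_max_left _ _).trans hs))
      _ ≤ max L 1 * Fint f (η * s) := by
          gcongr
          exact le_max_left _ _

namespace SubcriticalWitness

variable {p η L S s t : ℝ} {n : ℕ} {f : ℝ → ℝ}

lemma one_lt_eta_mul_of_le (w : SubcriticalWitness p n f η L S) (hs : S ≤ s) : 1 < η * s :=
  w.one_lt_eta_mul.trans_le (mul_le_mul_of_nonneg_left hs w.eta_pos.le)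

lemma one_lt_of_le (w : SubcriticalWitness p n f η L S) (hs : S ≤ s) : 1 < s := by
  have := w.one_lt_eta_mul_of_le hs
  nlinarith [w.eta_pos, w.eta_lt_one]

lemma exists_fstar_le_mul_rpow (w : SubcriticalWitness p n f η L S)
    (hf : ContinuousOn f (Ici 0)) (hpos : ∀ s, 1 < s → 0 < f s) :
    ∃ C > 0, ∀ s ≥ S, fstar f s ≤ C * s ^ (L - 1) := by
  have hS0 : 0 < S := one_pos.trans (w.one_lt_of_le le_rfl)
  have hFS : 0 < Fint f (η * S) := Fint_pos hf hpos w.one_lt_eta_mul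
  have hL := w.exponent_pos
  have hderiv : ∀ s ≥ S, HasDerivAt (fun s => Fint f (η * s)) (f (η * s) * η) s := fun s hs =>
    (hasDerivAt_Fint (hf.mono Ioi_subset_Ici_self)
      (one_pos.trans (w.one_lt_eta_mul_of_le hs))).comp s (hasDerivAt_const_mul η)
  have hgrowth : ∀ s ≥ S, f (η * s) * η * s ≤ L * Fint f (η * s) := by
    intro s hs
    have hηs := w.one_lt_eta_mul_of_le hs
    have hs0 : 0 < s := one_pos.trans (w.one_lt_of_le hs)
    have hηs_le : η * s ≤ s := mul_le_of_le_one_left hs0.le w.eta_lt_one.le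
    calc f (η * s) * η * s = f (η * s) * (η * s) := mul_assoc _ _ _
      _ ≤ fstar f s * s :=
          mul_le_mul (le_fstar hf ⟨hηs.le, hηs_le⟩) hηs_le (one_pos.trans hηs).le
            (fstar_pos hf hpos (w.one_lt_of_le hs)).le
      _ ≤ L * Fint f (η * s) := w.fstar_mul_le s hs
  refine ⟨L * Fint f (η * S) / S ^ L, by positivity, fun s hs => ?_⟩
  have hs0 : 0 < s := hS0.trans_le hs
  refine le_of_mul_le_mul_right ?_ hs0
  calc fstar f s * s ≤ L * Fint f (η * s) := w.fstar_mul_le s hs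
    _ ≤ L * (Fint f (η * S) * (s / S) ^ L) :=
        mul_le_mul_of_nonneg_left (le_mul_rpow_of_deriv_mul_le hS0 hderiv hgrowth hs) hL.le
    _ = L * Fint f (η * S) / S ^ L * s ^ (L - 1) * s := by
        rw [div_rpow hs0.le hS0.le, mul_assoc _ (s ^ (L - 1)), ← rpow_add_one hs0.ne',
          sub_add_cancel]
        ring

lemma tendsto_atTop (w : SubcriticalWitness p n f η L S) (hp : 1 < p)
    (hf : ContinuousOn f (Ici 0)) (hpos : ∀ s, 1 < s → 0 < f s) :
    Tendsto (fun s => (s ^ (p - 1) / fstar f s) ^ (((n : ℝ) + 1) / p) * (fstar f s * s))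
      atTop atTop := by
  obtain ⟨C, hC0, hC⟩ := w.exists_fstar_le_mul_rpow hf hpos
  have hS := w.one_lt_of_le le_rfl
  exact tendsto_rpow_mul_atTop_of_le_rpow hp (fstar_pos hf hpos hS) hC0 w.nOverPstar_mul_lt
    fun s hs => ⟨fstar_mono hf hS.le hs, hC s hs⟩

lemma gap_pos (w : SubcriticalWitness p n f η L S) : 0 < (n + 1) / L - nOverPstar p (n + 1) :=
  sub_pos.2 ((lt_div_iff₀ w.exponent_pos).2 w.nOverPstar_mul_lt)

lemma mul_fstar_le_pohozaevDensity (w : SubcriticalWitness p n f η L S) (hp : 0 ≤ p)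
    (hf : ContinuousOn f (Ici 0)) (hpos : ∀ s, 1 < s → 0 < f s) (hs : S ≤ s)
    (ht : t ∈ Icc (η * s) s) :
    ((n + 1) / L - nOverPstar p (n + 1)) * (fstar f s * s) ≤
      pohozaevDensity n (nOverPstar p (n + 1)) f t := by
  have hηs : 1 < η * s := w.one_lt_eta_mul_of_le hs
  have ht1 : 1 < t := hηs.trans_le ht.1
  have hL := w.exponent_pos
  have hF : fstar f s * s ≤ L * Fint f t := (w.fstar_mul_le s hs).trans <|
    mul_le_mul_of_nonneg_left
      ((strictMonoOn_Fint hf hpos).monotoneOn hηs.le ht1.le ht.1) hL.le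
  have hft : f t * t ≤ fstar f s * s :=
    mul_le_mul (le_fstar hf ⟨ht1.le, ht.2⟩) ht.2 (one_pos.trans ht1).le
      (fstar_pos hf hpos (w.one_lt_of_le hs)).le
  calc ((n + 1) / L - nOverPstar p (n + 1)) * (fstar f s * s)
      = (n + 1) / L * (fstar f s * s) - nOverPstar p (n + 1) * (fstar f s * s) := sub_mul _ _ _
    _ ≤ (n + 1) / L * (L * Fint f t) - nOverPstar p (n + 1) * (f t * t) := by
        have := nOverPstar_nonneg (N := n + 1) hp
        gcongr
    _ = pohozaevDensity n (nOverPstar p (n + 1)) f t := by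
        rw [pohozaevDensity, ← mul_assoc, div_mul_cancel₀ _ hL.ne']

lemma exists_neg_le_pohozaevDensity (w : SubcriticalWitness p n f η L S) (hp : 0 ≤ p)
    (hf : ContinuousOn f (Ici 0)) (hpos : ∀ s, 1 < s → 0 < f s) :
    ∃ Q > 0, ∀ t, 0 < t → -Q ≤ pohozaevDensity n (nOverPstar p (n + 1)) f t := by
  have hcont : ContinuousOn (pohozaevDensity n (nOverPstar p (n + 1)) f) (Ici 0) :=
    (continuousOn_const.mul (continuousOn_Fint hf)).sub
      (continuousOn_const.mul (hf.mul continuousOn_id))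
  obtain ⟨Q, hQ0, hQ⟩ := exists_abs_le_of_continuousOn_Ici hcont S
  refine ⟨Q, hQ0, fun t ht => ?_⟩
  rcases le_total t S with h | h
  · exact (abs_le.1 (hQ t ⟨ht.le, h⟩)).1
  · have hle := w.mul_fstar_le_pohozaevDensity hp hf hpos h
      ⟨mul_le_of_le_one_left ht.le w.eta_lt_one.le, le_rfl⟩
    have := mul_pos w.gap_pos (mul_pos (fstar_pos hf hpos (w.one_lt_of_le h)) ht)
    linarith

end SubcriticalWitness

/-! ### The Pohozaev functional -/

/-- The Pohozaev functional in dimension `n + 1`. The choice `a = nOverPstar p (n + 1)` makes the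
coefficient of `|u'| ^ p` in its derivative nonnegative. -/
noncomputable def pohozaev (p : ℝ) (n : ℕ) (a : ℝ) (f u : ℝ → ℝ) (x : ℝ) : ℝ :=
  x ^ (n + 1) * energy p f u x + a * (flux p n u x * u x)

namespace CauchySol

variable {p R1 R2 d a x : ℝ} {n : ℕ} {f u : ℝ → ℝ}

lemma hasDerivAt_phip_deriv (h : CauchySol p (n + 1) R1 R2 f u d) (hR1 : 0 ≤ R1)
    (hx : x ∈ Ioc R1 R2) :
    HasDerivAt (fun y => phip p (deriv u y)) (-f (u x) - n * phip p (deriv u x) / x) x := by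
  have hx0 : x ≠ 0 := (hR1.trans_lt hx.1).ne'
  have hquot : HasDerivAt (fun y => flux p n u y / y ^ n)
      (-f (u x) - n * phip p (deriv u x) / x) x := by
    refine ((h.hasDerivAt_flux hx).div (hasDerivAt_pow n x) (pow_ne_zero n hx0)).congr_deriv ?_
    rw [flux]
    rcases n with _ | m
    · simp
    · rw [Nat.add_sub_cancel]
      push_cast
      field_simp
      ring
  refine hquot.congr_of_eventuallyEq ?_
  filter_upwards [isOpen_ne.mem_nhds hx0] with y hy
  rw [flux, mul_div_cancel_left₀ _ (pow_ne_zero n hy)]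

lemma hasDerivAt_energy (h : CauchySol p (n + 1) R1 R2 f u d) (hp : 1 < p) (hR1 : 0 ≤ R1)
    (hf : ContinuousOn f (Ioi 0)) (hx : x ∈ Ioc R1 R2) (hux : 0 < u x) :
    HasDerivAt (energy p f u) (-(n / x) * |deriv u x| ^ p) x := by
  have hkin := hasDerivAt_abs_rpow_div_conj hp (h.hasDerivAt_phip_deriv hR1 hx)
  have hpot := (hasDerivAt_Fhat hf hux).comp x (h.1 x (Ioc_subset_Icc_self hx)).hasDerivAt
  refine (hkin.add hpot).congr_deriv ?_
  rw [← phip_mul_self (one_pos.trans hp).ne']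
  ring

lemma hasDerivAt_pohozaev (h : CauchySol p (n + 1) R1 R2 f u d) (hp : 1 < p) (hR1 : 0 ≤ R1)
    (hf : ContinuousOn f (Ioi 0)) (hx : x ∈ Ioc R1 R2) (hux : 0 < u x) :
    HasDerivAt (pohozaev p n a f u)
      (x ^ n * (pohozaevDensity n a f (u x) + (a + 1 - (n + 1) / p) * |deriv u x| ^ p)) x := by
  have hx0 : x ≠ 0 := (hR1.trans_lt hx.1).ne'
  have hp0 : p ≠ 0 := (one_pos.trans hp).ne'
  have hu := (h.1 x (Ioc_subset_Icc_self hx)).hasDerivAt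
  refine (((hasDerivAt_pow (n + 1) x).mul (h.hasDerivAt_energy hp hR1 hf hx hux)).add
    (((h.hasDerivAt_flux hx).mul hu).const_mul a)).congr_deriv ?_
  rw [Nat.add_sub_cancel, flux, energy, pohozaevDensity, Fhat_eq_Fint hux.le,
    ← phip_mul_self hp0]
  push_cast
  field_simp
  ring

lemma continuousOn_pohozaev (h : CauchySol p (n + 1) R1 R2 f u d) (hp : 0 ≤ p)
    (hf : ContinuousOn f (Ioi 0)) (hu : ∀ x ∈ Icc R1 R2, 0 < u x) :
    ContinuousOn (pohozaev p n a f u) (Icc R1 R2) := by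
  have hkin : ContinuousOn (fun x => |deriv u x| ^ p / (p / (p - 1))) (Icc R1 R2) :=
    (h.2.1.abs.rpow_const fun _ _ => Or.inr hp).div_const _
  have hpot : ContinuousOn (fun x => Fhat f (u x)) (Icc R1 R2) := fun x hx =>
    (hasDerivAt_Fhat hf (hu x hx)).continuousAt.comp_continuousWithinAt (h.continuousOn x hx)
  exact ((continuousOn_id.pow (n + 1)).mul (hkin.add hpot)).add
    (continuousOn_const.mul (h.continuousOn_flux.mul h.continuousOn))

lemma le_pohozaev_sub (h : CauchySol p (n + 1) R1 R2 f u d) (hp : 1 < p) (hR1 : 0 ≤ R1)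
    (hf : ContinuousOn f (Ioi 0)) (hu : ∀ x ∈ Icc R1 R2, 0 < u x) (ha : (n + 1) / p - 1 ≤ a)
    {m s t : ℝ} (hs : R1 ≤ s) (hst : s ≤ t) (ht : t ≤ R2)
    (hm : ∀ x ∈ Ioo s t, m ≤ pohozaevDensity n a f (u x)) :
    m * ((t ^ (n + 1) - s ^ (n + 1)) / (n + 1)) ≤
      pohozaev p n a f u t - pohozaev p n a f u s := by
  have hmem : ∀ x ∈ Ioo s t, x ∈ Ioc R1 R2 := fun x hx => ⟨hs.trans_lt hx.1, hx.2.le.trans ht⟩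
  refine le_sub_of_mul_pow_le_deriv hst
    ((h.continuousOn_pohozaev (one_pos.trans hp).le hf hu).mono (Icc_subset_Icc hs ht))
    (fun x hx => h.hasDerivAt_pohozaev hp hR1 hf (hmem x hx)
      (hu x (Ioc_subset_Icc_self (hmem x hx)))) fun x hx => ?_
  have hx0 : 0 ≤ x ^ n := pow_nonneg (hR1.trans (hmem x hx).1.le) n
  have hgrad : 0 ≤ (a + 1 - (n + 1) / p) * |deriv u x| ^ p :=
    mul_nonneg (by linarith) (by positivity)
  rw [mul_comm m]
  exact mul_le_mul_of_nonneg_left (by linarith [hm x hx]) hx0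

end CauchySol

/-! ### The Neumann problem -/

/-- Bound for a solution after a point where it is at most `1`, on an interval with right endpoint
`R` and for `f ≥ -K`. -/
noncomputable def growthBound (p : ℝ) (n : ℕ) (K R : ℝ) : ℝ :=
  1 + (K * R / (n + 1)) ^ (1 / (p - 1)) * R

/-- Bound at `ρ` for a solution before a point where it is at most `1`, on an interval with right
endpoint `R` and for `f ≥ -K`. -/
noncomputable def interiorBound (p : ℝ) (n : ℕ) (K R ρ : ℝ) : ℝ :=
  1 + (K * R ^ (n + 1) / ((n + 1) * ρ ^ n)) ^ (1 / (p - 1)) * R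

namespace NeumannSol

variable {p R1 R2 K x r : ℝ} {n : ℕ} {f u : ℝ → ℝ}

lemma cauchySol (h : NeumannSol p (n + 1) R1 R2 f u) : CauchySol p (n + 1) R1 R2 f u (u R1) :=
  ⟨h.1, h.2.1, rfl, h.2.2.2.1, h.2.2.2.2.2⟩

lemma pos (h : NeumannSol p (n + 1) R1 R2 f u) (hx : x ∈ Icc R1 R2) : 0 < u x := h.2.2.1 x hx

lemma deriv_right (h : NeumannSol p (n + 1) R1 R2 f u) : deriv u R2 = 0 := h.2.2.2.2.1

lemma flux_right (h : NeumannSol p (n + 1) R1 R2 f u) : flux p n u R2 = 0 := by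
  rw [flux, h.deriv_right, phip_zero, mul_zero]

lemma exists_le_one (h : NeumannSol p (n + 1) R1 R2 f u) (hR1 : 0 ≤ R1) (hR : R1 < R2)
    (hpos : ∀ s, 1 < s → 0 < f s) : ∃ r ∈ Icc R1 R2, u r ≤ 1 := by
  by_contra! hc
  have hanti : StrictAntiOn (flux p n u) (Icc R1 R2) := by
    refine strictAntiOn_of_hasDerivWithinAt_neg (f' := fun x => -(x ^ n) * f (u x))
      (convex_Icc R1 R2) h.cauchySol.continuousOn_flux (fun x hx => ?_) fun x hx => ?_
    all_goals rw [interior_Icc] at hx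
    · exact (h.cauchySol.hasDerivAt_flux ⟨hx.1, hx.2.le⟩).hasDerivWithinAt
    · exact mul_neg_of_neg_of_pos (neg_neg_of_pos (pow_pos (hR1.trans_lt hx.1) n))
        (hpos _ (hc x (Ioo_subset_Icc_self hx)))
  have hlt := hanti (left_mem_Icc.2 hR.le) (right_mem_Icc.2 hR.le) hR
  rw [h.cauchySol.flux_left, h.flux_right] at hlt
  exact hlt.false

lemma exists_first_le_one (h : NeumannSol p (n + 1) R1 R2 f u) (hp : 1 < p) (hR1 : 0 ≤ R1)
    (hR : R1 < R2) (hpos : ∀ s, 1 < s → 0 < f s) :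
    ∃ r ∈ Icc R1 R2, u r ≤ 1 ∧ (∀ x ∈ Ico R1 r, 1 < u x) ∧ AntitoneOn u (Icc R1 r) := by
  obtain ⟨r, hr, hur, hgt⟩ :=
    exists_first_le_of_continuousOn h.cauchySol.continuousOn (h.exists_le_one hR1 hR hpos)
  exact ⟨r, hr, hur, hgt, h.cauchySol.antitoneOn hp hR1 hr.2
    fun z hz => (hpos _ (hgt z ⟨hz.1.le, hz.2⟩)).le⟩

lemma le_growthBound_of_le_one (h : NeumannSol p (n + 1) R1 R2 f u) (hp : 1 < p) (hR1 : 0 ≤ R1)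
    (hK0 : 0 ≤ K) (hK : ∀ s, 0 < s → -K ≤ f s) (hr : R1 ≤ r) (hur : u r ≤ 1) (hrx : r ≤ x)
    (hx : x ≤ R2) : u x ≤ growthBound p n K R2 := by
  have hr0 : 0 ≤ r := hR1.trans hr
  have hx0 : 0 ≤ x := hr0.trans hrx
  have hR2 : 0 ≤ R2 := hx0.trans hx
  have hsub := h.cauchySol.sub_le hp hR1 hK0 hr hrx hx
    fun z hz => hK _ (h.pos ⟨hz.1.le, hz.2.le.trans hx⟩)
  calc u x ≤ 1 + (K * x / (n + 1)) ^ (1 / (p - 1)) * (x - r) := by linarith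
    _ ≤ 1 + (K * R2 / (n + 1)) ^ (1 / (p - 1)) * R2 := by
        gcongr
        linarith

lemma le_max_growthBound (h : NeumannSol p (n + 1) R1 R2 f u) (hp : 1 < p) (hR1 : 0 ≤ R1)
    (hR : R1 < R2) (hpos : ∀ s, 1 < s → 0 < f s) (hK0 : 0 ≤ K) (hK : ∀ s, 0 < s → -K ≤ f s)
    (hx : x ∈ Icc R1 R2) : u x ≤ max (u R1) (growthBound p n K R2) := by
  obtain ⟨r, hr, hur, -, hanti⟩ := h.exists_first_le_one hp hR1 hR hpos
  rcases le_total x r with hxr | hrx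
  · exact le_max_of_le_left (hanti (left_mem_Icc.2 hr.1) ⟨hx.1, hxr⟩ hx.1)
  · exact le_max_of_le_right (h.le_growthBound_of_le_one hp hR1 hK0 hK hr.1 hur hrx hx.2)

lemma neg_deriv_le_of_right (h : NeumannSol p (n + 1) R1 R2 f u) (hp : 1 < p) (hR1 : 0 ≤ R1)
    (hK0 : 0 ≤ K) (hK : ∀ s, 0 < s → -K ≤ f s) (hx0 : 0 < x) (hx : x ∈ Icc R1 R2) :
    -deriv u x ≤ (K * R2 ^ (n + 1) / ((n + 1) * x ^ n)) ^ (1 / (p - 1)) := by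
  have hR2 : 0 < R2 := hx0.trans_le hx.2
  refine le_rpow_of_phip_le hp (by positivity) ?_
  have hflux := h.cauchySol.flux_sub_le hR1 hx.1 hx.2 le_rfl
    fun z hz => hK _ (h.pos ⟨hx.1.trans hz.1.le, hz.2.le⟩)
  rw [h.flux_right, zero_sub, flux] at hflux
  rw [phip_neg, le_div_iff₀ (by positivity)]
  calc -phip p (deriv u x) * ((n + 1) * x ^ n) = (n + 1) * -(x ^ n * phip p (deriv u x)) := by ring
    _ ≤ (n + 1) * (K * ((R2 ^ (n + 1) - x ^ (n + 1)) / (n + 1))) := by gcongr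
    _ = K * (R2 ^ (n + 1) - x ^ (n + 1)) := by field_simp
    _ ≤ K * R2 ^ (n + 1) := by
        gcongr
        exact sub_le_self _ (by positivity)

lemma le_interiorBound_of_le_one (h : NeumannSol p (n + 1) R1 R2 f u) (hp : 1 < p)
    (hR1 : 0 ≤ R1) (hK0 : 0 ≤ K) (hK : ∀ s, 0 < s → -K ≤ f s) {ρ : ℝ} (hρ0 : 0 < ρ)
    (hρ : R1 ≤ ρ) (hr : r ∈ Icc ρ R2) (hur : u r ≤ 1) : u ρ ≤ interiorBound p n K R2 ρ := by
  have hR2 : 0 < R2 := hρ0.trans_le (hr.1.trans hr.2)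
  have hsub : Icc ρ r ⊆ Icc R1 R2 := Icc_subset_Icc hρ hr.2
  set V : ℝ := (K * R2 ^ (n + 1) / ((n + 1) * ρ ^ n)) ^ (1 / (p - 1)) with hV
  have hderiv : ∀ z ∈ interior (Icc ρ r), -V ≤ deriv u z := by
    intro z hz
    have hz' := interior_subset hz
    refine neg_le.1 ((h.neg_deriv_le_of_right hp hR1 hK0 hK (hρ0.trans_le hz'.1)
      (hsub hz')).trans ?_)
    have hz0 : 0 < z := hρ0.trans_le hz'.1
    rw [hV]
    gcongr
    exact hz'.1
  have hmv := (convex_Icc ρ r).mul_sub_le_image_sub_of_le_deriv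
    (h.cauchySol.continuousOn.mono hsub)
    (fun z hz => (h.1 z (hsub (interior_subset hz))).differentiableWithinAt) hderiv
    ρ (left_mem_Icc.2 hr.1) r (right_mem_Icc.2 hr.1) hr.1
  calc u ρ ≤ 1 + V * (r - ρ) := by linarith
    _ ≤ 1 + V * R2 := by
        gcongr
        linarith [hr.2]

lemma exists_dropRadius_lt (h : NeumannSol p (n + 1) R1 R2 f u) (hp : 1 < p) (hR1 : 0 ≤ R1)
    (hR : R1 < R2) (hpos : ∀ s, 1 < s → 0 < f s) {B η : ℝ} (hB0 : 0 < B)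
    (hB : ∀ s ∈ Icc 1 (u R1), f s ≤ B) (hη : η < 1) (hηu : 1 < η * u R1) :
    ∃ r ∈ Icc R1 R2, dropRadius p n B ((1 - η) * u R1) < r ∧ u r ≤ 1 ∧
      MapsTo u (Icc R1 (dropRadius p n B ((1 - η) * u R1))) (Icc (η * u R1) (u R1)) := by
  obtain ⟨r, hr, hur, hgt, hanti⟩ := h.exists_first_le_one hp hR1 hR hpos
  set δ := dropRadius p n B ((1 - η) * u R1)
  have hle : ∀ x ∈ Icc R1 r, u x ≤ u R1 := fun x hx => hanti (left_mem_Icc.2 hr.1) hx hx.1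
  have hℓ : 0 < (1 - η) * u R1 :=
    mul_pos (sub_pos.2 hη) (h.pos (left_mem_Icc.2 hR.le))
  have hge : ∀ x ∈ Icc R1 r, x ≤ δ → η * u R1 ≤ u x := by
    intro x hx hxδ
    have := h.cauchySol.sub_le_of_le_dropRadius hp hR1 hB0 hℓ ⟨hx.1, hx.2.trans hr.2⟩ hxδ
      fun z hz => hB _ ⟨(hgt z ⟨hz.1.le, hz.2.trans_le hx.2⟩).le,
        hle z ⟨hz.1.le, hz.2.le.trans hx.2⟩⟩
    linarith
  have hδr : δ < r := by
    by_contra! hrδ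
    linarith [hge r ⟨hr.1, le_rfl⟩ hrδ]
  refine ⟨r, hr, hδr, hur, fun x hx => ?_⟩
  have hxr : x ∈ Icc R1 r := ⟨hx.1, hx.2.trans hδr.le⟩
  exact ⟨hge x hxr hx.2, hle x hxr⟩

lemma mul_pow_le_of_le_pohozaevDensity (h : NeumannSol p (n + 1) 0 R2 f u) (hp : 1 < p)
    (hf : ContinuousOn f (Ioi 0)) {a m Q δ : ℝ} (ha : (n + 1) / p - 1 ≤ a) (hQ0 : 0 ≤ Q)
    (hδ : δ ∈ Icc 0 R2) (hm : ∀ x ∈ Ioo 0 δ, m ≤ pohozaevDensity n a f (u x))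
    (hQ : ∀ x ∈ Ioo δ R2, -Q ≤ pohozaevDensity n a f (u x)) :
    m * δ ^ (n + 1) ≤ R2 ^ (n + 1) * ((n + 1) * Fint f (u R2) + Q) := by
  have hp0 : p ≠ 0 := (one_pos.trans hp).ne'
  have hR2 : 0 ≤ R2 := hδ.1.trans hδ.2
  have hu : ∀ x ∈ Icc 0 R2, 0 < u x := fun x hx => h.pos hx
  have hinner := h.cauchySol.le_pohozaev_sub hp le_rfl hf hu ha le_rfl hδ.1 hδ.2 hm
  have houter := h.cauchySol.le_pohozaev_sub hp le_rfl hf hu ha hδ.1 hδ.2 le_rfl hQ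
  have hP0 : pohozaev p n a f u 0 = 0 := by
    rw [pohozaev, h.cauchySol.flux_left, zero_pow n.succ_ne_zero]
    ring
  have hPR : pohozaev p n a f u R2 = R2 ^ (n + 1) * Fint f (u R2) := by
    rw [pohozaev, energy, h.flux_right, h.deriv_right, abs_zero, zero_rpow hp0,
      Fhat_eq_Fint (hu R2 (right_mem_Icc.2 hR2)).le]
    ring
  have hQδ : 0 ≤ Q * (δ ^ (n + 1) / (n + 1)) := by
    have := hδ.1
    positivity
  rw [hP0, zero_pow n.succ_ne_zero] at hinner
  rw [hPR] at houter
  have hn : (0 : ℝ) < n + 1 := by positivity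
  calc m * δ ^ (n + 1) = (n + 1) * (m * ((δ ^ (n + 1) - 0) / (n + 1))) := by field_simp; ring
    _ ≤ (n + 1) * (R2 ^ (n + 1) * Fint f (u R2) + Q * (R2 ^ (n + 1) / (n + 1))) := by
        gcongr
        rw [sub_div, mul_sub] at houter
        linarith
    _ = R2 ^ (n + 1) * ((n + 1) * Fint f (u R2) + Q) := by field_simp

lemma mul_rpow_mul_fstar_le (h : NeumannSol p (n + 1) 0 R2 f u) (hp : 1 < p) (hR : 0 < R2)
    (hf : ContinuousOn f (Ici 0)) (hpos : ∀ s, 1 < s → 0 < f s) {η L S Q : ℝ}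
    (w : SubcriticalWitness p n f η L S) (hQ0 : 0 ≤ Q)
    (hQ : ∀ t, 0 < t → -Q ≤ pohozaevDensity n (nOverPstar p (n + 1)) f t) (hS : S ≤ u 0) :
    ((n + 1) / L - nOverPstar p (n + 1)) * ((n + 1) * (1 - η) ^ (p - 1)) ^ (((n : ℝ) + 1) / p) *
        ((u 0 ^ (p - 1) / fstar f (u 0)) ^ (((n : ℝ) + 1) / p) * (fstar f (u 0) * u 0)) ≤
      R2 ^ (n + 1) * ((n + 1) * Fint f (u R2) + Q) := by
  have hp0 : 0 < p := one_pos.trans hp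
  have hfstar : 0 < fstar f (u 0) := fstar_pos hf hpos (w.one_lt_of_le hS)
  have hη : 0 < 1 - η := sub_pos.2 w.eta_lt_one
  have hu0 : 0 < u 0 := h.pos (left_mem_Icc.2 hR.le)
  have hδ0 := dropRadius_pos (p := p) (n := n) hfstar (mul_pos hη hu0)
  obtain ⟨r, hr, hδr, -, hmaps⟩ := h.exists_dropRadius_lt hp le_rfl hR hpos hfstar
    (fun s hs => le_fstar hf hs) w.eta_lt_one (w.one_lt_eta_mul_of_le hS)
  have hpoh := h.mul_pow_le_of_le_pohozaevDensity hp (hf.mono Ioi_subset_Ici_self)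
    (by exact_mod_cast div_sub_one_le_nOverPstar (N := n + 1) hp0) hQ0
    ⟨hδ0.le, hδr.le.trans hr.2⟩
    (fun x hx => w.mul_fstar_le_pohozaevDensity hp0.le hf hpos hS
      (hmaps (Ioo_subset_Icc_self hx)))
    (fun x hx => hQ _ (h.pos ⟨hδ0.le.trans hx.1.le, hx.2.le⟩))
  rw [dropRadius_mul_pow hfstar.le hη.le hu0.le] at hpoh
  linarith

end NeumannSol

/-! ### A priori bounds -/

section Bounds

variable {p R1 R2 : ℝ} {n : ℕ} {f : ℝ → ℝ}

lemma exists_init_le_of_pos (hp : 1 < p) (hR1 : 0 < R1) (hR : R1 < R2)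
    (hf : ContinuousOn f (Ici 0)) (hpos : ∀ s, 1 < s → 0 < f s) :
    ∃ D, ∀ u, NeumannSol p (n + 1) R1 R2 f u → u R1 ≤ D := by
  obtain ⟨K, hK0, hK⟩ := exists_neg_le_of_pos hf hpos
  refine ⟨interiorBound p n K R2 R1, fun u h => ?_⟩
  obtain ⟨r, hr, hur⟩ := h.exists_le_one hR1.le hR hpos
  exact h.le_interiorBound_of_le_one hp hR1.le hK0.le hK hR1 le_rfl hr hur

lemma Fsubl.exists_init_le (hsub : Fsubl p f) (hp : 1 < p) (hR : 0 < R2)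
    (hf : ContinuousOn f (Ici 0)) (hpos : ∀ s, 1 < s → 0 < f s) :
    ∃ D, ∀ u, NeumannSol p (n + 1) 0 R2 f u → u 0 ≤ D := by
  obtain ⟨K, hK0, hK⟩ := exists_neg_le_of_pos hf hpos
  obtain ⟨A, hA0, hA⟩ := hsub.exists_le_mul_rpow hp.le hf
  set δ := dropRadius p n A (1 - 1 / 2) with hδ
  have hδ0 : 0 < δ := dropRadius_pos hA0 (by norm_num)
  refine ⟨max 2 (2 * interiorBound p n K R2 δ), fun u h => ?_⟩
  rcases le_or_gt (u 0) 2 with h2 | h2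
  · exact le_max_of_le_left h2
  · have hu0 : 0 < u 0 := two_pos.trans h2
    have hf_le : ∀ s ∈ Icc 1 (u 0), f s ≤ A * u 0 ^ (p - 1) := fun s hs =>
      (hA s hs.1).trans <| mul_le_mul_of_nonneg_left
        (rpow_le_rpow (zero_le_one.trans hs.1) hs.2 (sub_pos.2 hp).le) hA0.le
    obtain ⟨r, hr, hδr, hur, hmaps⟩ :=
      h.exists_dropRadius_lt (η := 1 / 2) hp le_rfl hR hpos (by positivity) hf_le
        (by norm_num) (by linarith)
    rw [dropRadius_mul_rpow_mul (by norm_num) hu0, ← hδ] at hδr hmaps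
    have hhalf := (hmaps (right_mem_Icc.2 hδ0.le)).1
    have hbound := h.le_interiorBound_of_le_one hp le_rfl hK0.le hK hδ0 hδ0.le
      ⟨hδr.le, hr.2⟩ hur
    exact le_max_of_le_right (by linarith)

lemma Subcritical.exists_init_le (hsub : Subcritical p (n + 1) f) (hp : 1 < p) (hR : 0 < R2)
    (hf : ContinuousOn f (Ici 0)) (hpos : ∀ s, 1 < s → 0 < f s) :
    ∃ D, ∀ u, NeumannSol p (n + 1) 0 R2 f u → u 0 ≤ D := by
  obtain ⟨K, hK0, hK⟩ := exists_neg_le_of_pos hf hpos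
  obtain ⟨η, L, S, w⟩ := hsub.exists_witness hp.le hf hpos
  obtain ⟨Q, hQ0, hQ⟩ := w.exists_neg_le_pohozaevDensity (one_pos.trans hp).le hf hpos
  obtain ⟨M, -, hM⟩ :=
    exists_abs_le_of_continuousOn_Ici (continuousOn_Fint hf) (growthBound p n K R2)
  set c : ℝ := ((n + 1) / L - nOverPstar p (n + 1)) *
    ((n + 1) * (1 - η) ^ (p - 1)) ^ (((n : ℝ) + 1) / p)
  have hc : 0 < c := by
    have := w.gap_pos
    have := sub_pos.2 w.eta_lt_one
    positivity
  obtain ⟨D, hD⟩ := eventually_atTop.1 <| ((w.tendsto_atTop hp hf hpos).const_mul_atTop hc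
    |>.eventually_gt_atTop (R2 ^ (n + 1) * ((n + 1) * M + Q)))
  refine ⟨max D S, fun u h => ?_⟩
  by_contra! hu
  obtain ⟨hDu, hSu⟩ := max_lt_iff.1 hu
  obtain ⟨r, hr, hur⟩ := h.exists_le_one le_rfl hR hpos
  have hR2 : R2 ∈ Icc 0 R2 := right_mem_Icc.2 hR.le
  have hF : Fint f (u R2) ≤ M := (abs_le.1 (hM _ ⟨(h.pos hR2).le,
    h.le_growthBound_of_le_one hp le_rfl hK0.le hK hr.1 hur hr.2 le_rfl⟩)).2
  refine (hD (u 0) hDu.le).not_ge ?_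
  calc _ ≤ R2 ^ (n + 1) * ((n + 1) * Fint f (u R2) + Q) :=
        h.mul_rpow_mul_fstar_le hp hR hf hpos w hQ0.le hQ hSu.le
    _ ≤ R2 ^ (n + 1) * ((n + 1) * M + Q) := by gcongr

lemma exists_bound_of_init_le (hp : 1 < p) (hR1 : 0 ≤ R1) (hR : R1 < R2)
    (hf : ContinuousOn f (Ici 0)) (hpos : ∀ s, 1 < s → 0 < f s)
    (hD : ∃ D, ∀ u, NeumannSol p (n + 1) R1 R2 f u → u R1 ≤ D) :
    ∃ C : ℝ, 0 < C ∧ ∀ u : ℝ → ℝ, NeumannSol p (n + 1) R1 R2 f u →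
      ∀ x ∈ Icc R1 R2, |u x| + |deriv u x| ≤ C := by
  obtain ⟨D, hD⟩ := hD
  obtain ⟨K, hK0, hK⟩ := exists_neg_le_of_pos hf hpos
  set G := max D (growthBound p n K R2)
  obtain ⟨B, hB0, hB⟩ := exists_abs_le_of_continuousOn_Ici hf G
  have hR2 : 0 < R2 := hR1.trans_lt hR
  set V : ℝ := (B * R2 / (n + 1)) ^ (1 / (p - 1)) with hVdef
  refine ⟨max G 0 + V, by positivity, fun u h x hx => ?_⟩
  have hx0 : 0 ≤ x := hR1.trans hx.1
  have hu : ∀ z ∈ Icc R1 R2, u z ∈ Icc 0 G := fun z hz => ⟨(h.pos hz).le,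
    (h.le_max_growthBound hp hR1 hR hpos hK0.le hK hz).trans (max_le_max_right _ (hD u h))⟩
  have hfu : ∀ z ∈ Ioo R1 x, |f (u z)| ≤ B :=
    fun z hz => hB _ (hu z ⟨hz.1.le, hz.2.le.trans hx.2⟩)
  have hmono : (B * x / (n + 1)) ^ (1 / (p - 1)) ≤ V := by
    rw [hVdef]
    gcongr
    exact hx.2
  have hderiv : |deriv u x| ≤ V := abs_le'.2
    ⟨(h.cauchySol.deriv_le hp hR1 hB0.le hx fun z hz => (abs_le.1 (hfu z hz)).1).trans hmono,
      (h.cauchySol.neg_deriv_le hp hR1 hB0.le hx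
        fun z hz => (abs_le.1 (hfu z hz)).2).trans hmono⟩
  rw [abs_of_pos (h.pos hx)]
  exact add_le_add (le_max_of_le_left (hu x hx).2) hderiv

end Bounds

theorem stmt0_general (p : ℝ) (hp : 1 < p) (N : ℕ) (hN : 1 ≤ N)
    (R1 R2 : ℝ) (hR1 : 0 ≤ R1) (hR12 : R1 < R2)
    (f : ℝ → ℝ) (hf : ContinuousOn f (Ici 0)) (hpos : ∀ s : ℝ, 1 < s → 0 < f s)
    (hball : R1 = 0 → Fsubl p f ∨ Subcritical p N f) :
    ∃ C : ℝ, 0 < C ∧ ∀ u : ℝ → ℝ, NeumannSol p N R1 R2 f u →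
      ∀ x ∈ Icc R1 R2, |u x| + |deriv u x| ≤ C := by
  obtain ⟨n, rfl⟩ := Nat.exists_eq_add_of_le' hN
  refine exists_bound_of_init_le hp hR1 hR12 hf hpos ?_
  rcases hR1.eq_or_lt with rfl | hR1
  · rcases hball rfl with hsubl | hsubc
    · exact hsubl.exists_init_le hp hR12 hf hpos
    · exact hsubc.exists_init_le hp hR12 hf hpos
  · exact exists_init_le_of_pos hp hR1 hR12 hf hpos

theorem stmt0 (p : ℝ) (hp : 1 < p) (N : ℕ) (hN : 1 ≤ N)
    (R1 R2 : ℝ) (hR1 : 0 ≤ R1) (hR12 : R1 < R2)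
    (f : ℝ → ℝ) (hreg : Freg f) (heq : Feq f) (h0 : Fzero p f)
    (hball : R1 = 0 → Fsubl p f ∨ Fsubc p N f) :
    ∃ C : ℝ, 0 < C ∧ ∀ u : ℝ → ℝ, NeumannSol p N R1 R2 f u →
      ∀ x ∈ Icc R1 R2, |u x| + |deriv u x| ≤ C :=
  stmt0_general p hp N hN R1 R2 hR1 hR12 f hreg.1 heq.2.2.2 fun h =>
    (hball h).imp_right Fsubc.subcritical
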